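/- Let A and C be unital C*-algebras, let G be a normal subgroup of the unitary group U(C) containing the identity component U₀(C), let h₁ : A → C be a unital *-homomorphism, let u ∈ U(C), and define h₂(a) = u* h₁(a) u for a ∈ A. If h₁ and h₂ are G-strongly unitarily equivalent, then there exist a unitary v ∈ U(C) with u⁻¹v ∈ G and a unital *-homomorphism Φ : C(𝕋, A) → C such that Φ(const a) = h₁(a) for all a ∈ A and Φ(ζ) = v. -/

import Mathlib

/-- The canonical unitary `ζ ∈ C(𝕋, A)`, `ζ(z) = z • 1`. -/
noncomputable def circleUnitary (A : Type*) [NormedRing A] [NormedAlgebra ℂ A] :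
    C(Circle, A) :=
  ⟨fun z => (z : ℂ) • (1 : A), (continuous_subtype_val.smul continuous_const)⟩

/-!
If `h₂ = ad u ∘ h₁ = ad w ∘ h₁` with `w ∈ G`, then `v = u w⁻¹` commutes with the range of `h₁`, and
`u⁻¹ v = w⁻¹ ∈ G`. Let `ψ : C(𝕋, ℂ) → C` be the functional calculus of `v`. Since `h₁` and `ψ`
have commuting ranges they induce `A ⊗ C(𝕋, ℂ) → C`, `a ⊗ g ↦ h₁(a) ψ(g)`, and `Φ` is its
extension by continuity along the dense inclusion `A ⊗ C(𝕋, ℂ) ⊆ C(𝕋, A)`.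

The point is that the map on the tensor product is contractive for the sup norm. If `c ∈ C`
commutes with the range of `ψ`, a character of a commutative C⋆-algebra containing `c⋆c` and that
range, chosen to attain the norm of `c⋆c`, restricts to evaluation at some point `x` on `C(𝕋, ℂ)`;
so the norm of `c` can be computed modulo `C · ψ(ker ev_x)`. Modulo this left ideal the image of
a tensor `t` is `h₁(t(x))`, whose norm is at most `‖t‖`.
-/

open scoped TensorProduct
open WeakDual

section StarAlgHomConstructions

variable {R A B C : Type*} [CommSemiring R] [StarRing R]
  [Semiring A] [StarRing A] [Algebra R A] [StarModule R A]
  [Semiring B] [StarRing B] [Algebra R B] [StarModule R B]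
  [Semiring C] [StarRing C] [Algebra R C]

/-- The ⋆-homomorphism `a ⊗ b ↦ f a * g b` on the algebraic tensor product induced by two
⋆-homomorphisms with commuting ranges; the ⋆-version of `Algebra.TensorProduct.lift`. -/
noncomputable def tensorStarLift (f : A →⋆ₐ[R] C) (g : B →⋆ₐ[R] C)
    (hfg : ∀ a b, Commute (f a) (g b)) : A ⊗[R] B →⋆ₐ[R] C where
  __ := Algebra.TensorProduct.lift f.toAlgHom g.toAlgHom hfg
  map_star' t := by
    change Algebra.TensorProduct.lift f.toAlgHom g.toAlgHom hfg (star t) =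
      star (Algebra.TensorProduct.lift f.toAlgHom g.toAlgHom hfg t)
    induction t with
    | zero => simp
    | add s t hs ht => simp [hs, ht]
    | tmul a b => simpa [map_star] using (hfg (star a) (star b)).eq

@[simp]
lemma tensorStarLift_tmul (f : A →⋆ₐ[R] C) (g : B →⋆ₐ[R] C)
    (hfg : ∀ a b, Commute (f a) (g b)) (a : A) (b : B) :
    tensorStarLift f g hfg (a ⊗ₜ b) = f a * g b :=
  Algebra.TensorProduct.lift_tmul f.toAlgHom g.toAlgHom hfg a b

lemma commute_tensorStarLift {f : A →⋆ₐ[R] C} {g : B →⋆ₐ[R] C}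
    (hfg : ∀ a b, Commute (f a) (g b)) {c : C} (hf : ∀ a, Commute (f a) c)
    (hg : ∀ b, Commute (g b) c) (t : A ⊗[R] B) : Commute (tensorStarLift f g hfg t) c := by
  induction t with
  | zero => simp
  | add s t hs ht => simpa using hs.add_left ht
  | tmul a b => simpa using (hf a).mul_left (hg b)

end StarAlgHomConstructions

lemma exists_starAlgHom_extension_of_denseRange {𝕜 B D C : Type*} [NormedField 𝕜]
    [Semiring B] [Star B] [Algebra 𝕜 B]
    [NormedRing D] [StarRing D] [ContinuousStar D] [NormedAlgebra 𝕜 D]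
    [NormedRing C] [StarRing C] [ContinuousStar C] [NormedAlgebra 𝕜 C] [CompleteSpace C]
    {e : B →⋆ₐ[𝕜] D} (he : DenseRange e) {f : B →⋆ₐ[𝕜] C} {K : ℝ}
    (hf : ∀ b, ‖f b‖ ≤ K * ‖e b‖) : ∃ Φ : D →⋆ₐ[𝕜] C, ∀ b, Φ (e b) = f b := by
  let _ : Ring B := Algebra.semiringToRing 𝕜
  let F : D →L[𝕜] C := f.toAlgHom.toLinearMap.extendOfNorm e.toAlgHom.toLinearMap
  have hF (b : B) : F (e b) = f b := LinearMap.extendOfNorm_eq he ⟨K, hf⟩ b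
  have hmul (x y : D) : F (x * y) = F x * F y := by
    refine he.induction_on₂ (isClosed_eq (by fun_prop) (by fun_prop)) (fun a b => ?_) x y
    rw [← map_mul, hF, hF, hF, map_mul]
  have hstar (x : D) : F (star x) = star (F x) := by
    refine he.induction_on x (isClosed_eq (by fun_prop) (by fun_prop)) fun a => ?_
    rw [← map_star, hF, hF, map_star]
  have hone : F 1 = 1 := by rw [← map_one e, hF, map_one]
  exact ⟨{ AlgHom.ofLinearMap F.toLinearMap hone hmul with map_star' := hstar }, hF⟩

section PartitionOfUnity

variable {X : Type*} [TopologicalSpace X] [CompactSpace X] [T2Space X]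

lemma exists_finset_forall_norm_sum_smul_sub_lt {E : Type*} [SeminormedAddCommGroup E]
    [NormedSpace ℝ E] (f : C(X, E)) {ε : ℝ} (hε : 0 < ε) :
    ∃ (s : Finset X) (ρ : X → C(X, ℝ)), ∀ y, ‖∑ i ∈ s, ρ i y • f i - f y‖ < ε := by
  obtain ⟨ρ, hρ⟩ := PartitionOfUnity.exists_isSubordinate isClosed_univ
    (fun x => f ⁻¹' Metric.ball (f x) ε) (fun x => Metric.isOpen_ball.preimage f.continuous)
    fun x _ => Set.mem_iUnion.2 ⟨x, Metric.mem_ball_self hε⟩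
  have hfin := ρ.locallyFinite.finite_nonempty_of_compact
  refine ⟨hfin.toFinset, ρ, fun y => ?_⟩
  have hmem : ∑ᶠ i, ρ i y • f i ∈ Metric.ball (f y) ε :=
    ρ.finsum_smul_mem_convex (g := fun i _ => f i) (Set.mem_univ y)
      (fun i hi => Metric.mem_ball_comm.1 (hρ i (subset_tsupport _ hi))) (convex_ball _ _)
  rw [finsum_eq_sum_of_support_subset (s := hfin.toFinset)] at hmem
  · exact mem_ball_iff_norm.1 hmem
  · intro i hi
    exact hfin.mem_toFinset.2 ⟨y, left_ne_zero_of_smul hi⟩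

end PartitionOfUnity

section ContinuousMapTensor

variable (X A : Type*) [TopologicalSpace X] [NormedRing A] [StarRing A] [ContinuousStar A]
  [NormedAlgebra ℂ A]

/-- The inclusion of `A` into `C(X, A)` as the constant functions. -/
def constStarAlgHom : A →⋆ₐ[ℂ] C(X, A) where
  toFun := ContinuousMap.const X
  map_one' := rfl
  map_mul' _ _ := rfl
  map_zero' := rfl
  map_add' _ _ := rfl
  commutes' _ := rfl
  map_star' _ := rfl

variable [StarModule ℂ A]

/-- The inclusion of `C(X, ℂ)` into `C(X, A)` as the scalar-valued functions. -/
noncomputable def scalarStarAlgHom : C(X, ℂ) →⋆ₐ[ℂ] C(X, A) :=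
  ContinuousMap.compStarAlgHom X (StarAlgHom.ofId ℂ A) (algebraMapCLM ℂ A).continuous

/-- The canonical inclusion of the algebraic tensor product of `A` and `C(X, ℂ)` into `C(X, A)`. -/
noncomputable def tensorToContinuousMap : A ⊗[ℂ] C(X, ℂ) →⋆ₐ[ℂ] C(X, A) :=
  tensorStarLift (constStarAlgHom X A) (scalarStarAlgHom X A) fun a g =>
    ContinuousMap.ext fun x => (Algebra.commutes (g x) a).symm

variable {X A}

lemma scalarStarAlgHom_apply (g : C(X, ℂ)) (x : X) :
    scalarStarAlgHom X A g x = g x • 1 :=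
  Algebra.algebraMap_eq_smul_one (g x)

@[simp]
lemma tensorToContinuousMap_tmul_apply (a : A) (g : C(X, ℂ)) (x : X) :
    tensorToContinuousMap X A (a ⊗ₜ g) x = g x • a := by
  change a * algebraMap ℂ A (g x) = g x • a
  rw [← Algebra.commutes, Algebra.smul_def]

lemma denseRange_tensorToContinuousMap [CompactSpace X] [T2Space X] :
    DenseRange (tensorToContinuousMap X A) := by
  refine Metric.denseRange_iff.2 fun f ε hε => ?_
  obtain ⟨s, ρ, hρ⟩ := exists_finset_forall_norm_sum_smul_sub_lt f hε
  let g (i : X) : C(X, ℂ) := (Complex.ofRealCLM : C(ℝ, ℂ)).comp (ρ i)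
  refine ⟨∑ i ∈ s, f i ⊗ₜ g i, ?_⟩
  rw [dist_comm, ContinuousMap.dist_lt_iff hε]
  intro y
  simpa [dist_eq_norm, ContinuousMap.sum_apply, g] using hρ y

end ContinuousMapTensor

lemma exists_character_norm_apply_eq {B : Type*} [CommCStarAlgebra B] [Nontrivial B] (b : B) :
    ∃ ω : characterSpace ℂ B, ‖ω b‖ = ‖b‖ := by
  obtain ⟨z, hz, hzb⟩ := spectrum.exists_nnnorm_eq_spectralRadius b
  obtain ⟨ω, rfl⟩ := CharacterSpace.mem_spectrum_iff_exists.1 hz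
  have hb : IsStarNormal b := ⟨mul_comm _ _⟩
  rw [hb.spectralRadius_eq_nnnorm, ENNReal.coe_inj] at hzb
  exact ⟨ω, congrArg NNReal.toReal hzb⟩

section FiberIdeal

variable {X C : Type*} [TopologicalSpace X] [Ring C] [StarRing C] [Algebra ℂ C]

/-- The left ideal `C · ψ(ker ev_x)` generated by the image under `ψ` of the functions vanishing
at `x`. If the range of `ψ` is central, its closure is the kernel of the projection of the
`C(X)`-algebra `C` onto its fibre at `x`. -/
def fiberIdeal (ψ : C(X, ℂ) →⋆ₐ[ℂ] C) (x : X) : Ideal C :=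
  Ideal.span (ψ '' {g | g x = 0})

lemma map_sub_algebraMap_mem_fiberIdeal (ψ : C(X, ℂ) →⋆ₐ[ℂ] C) (g : C(X, ℂ)) (x : X) :
    ψ g - algebraMap ℂ C (g x) ∈ fiberIdeal ψ x := by
  refine Ideal.subset_span ⟨g - algebraMap ℂ C(X, ℂ) (g x), by simp, ?_⟩
  rw [map_sub, AlgHomClass.commutes]

end FiberIdeal

section Localization

variable {X : Type*} [TopologicalSpace X] [CompactSpace X]

section CharacterBounds

variable [T2Space X]

lemma exists_forall_character_apply_map_eq {B : Type*} [CStarAlgebra B] (ψ : C(X, ℂ) →⋆ₐ[ℂ] B)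
    (ω : characterSpace ℂ B) : ∃ x, ∀ g, ω (ψ g) = g x := by
  obtain ⟨x, hx⟩ := (CharacterSpace.continuousMapEval_bijective (X := X) (𝕜 := ℂ)).surjective
    (CharacterSpace.compContinuousMap ψ ω)
  exact ⟨x, fun g => (DFunLike.congr_fun hx g).symm⟩

lemma exists_forall_norm_apply_mul_norm_le {B : Type*} [CommCStarAlgebra B] [Nontrivial B]
    (ψ : C(X, ℂ) →⋆ₐ[ℂ] B) (b : B) : ∃ x, ∀ d, ‖d x‖ * ‖b‖ ≤ ‖b * ψ d‖ := by
  obtain ⟨ω, hω⟩ := exists_character_norm_apply_eq b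
  obtain ⟨x, hx⟩ := exists_forall_character_apply_map_eq ψ ω
  refine ⟨x, fun d => ?_⟩
  calc ‖d x‖ * ‖b‖ = ‖ω (b * ψ d)‖ := by rw [map_mul, norm_mul, hx, hω, mul_comm]
    _ ≤ ‖b * ψ d‖ := spectrum.norm_le_norm_of_mem (CharacterSpace.apply_mem_spectrum ω _)

end CharacterBounds

variable {C : Type*} [CStarAlgebra C]

open scoped IsMulCommutative in
open StarAlgebra in
lemma exists_forall_norm_apply_mul_norm_le_of_isSelfAdjoint [T2Space X] [Nontrivial C]
    (ψ : C(X, ℂ) →⋆ₐ[ℂ] C) {b : C} (hb : IsSelfAdjoint b) (hψ : ∀ g, Commute b (ψ g)) :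
    ∃ x, ∀ d, ‖d x‖ * ‖b‖ ≤ ‖b * ψ d‖ := by
  let s : Set C := insert b (Set.range ψ)
  have hs : ∀ p ∈ s, ∀ q ∈ s, p * q = q * p := by
    rintro _ (rfl | ⟨f, rfl⟩) _ (rfl | ⟨g, rfl⟩)
    exacts [rfl, hψ g, (hψ f).symm, by rw [← map_mul, mul_comm, map_mul]]
  have hstar : ∀ q ∈ s, star q ∈ s := by
    rintro _ (rfl | ⟨g, rfl⟩)
    exacts [.inl hb, .inr ⟨star g, map_star ψ g⟩]
  have : IsMulCommutative (adjoin ℂ s) :=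
    isMulCommutative_adjoin ℂ hs fun p hp q hq => hs p hp _ (hstar q hq)
  let S : StarSubalgebra ℂ C := (adjoin ℂ s).topologicalClosure
  have : IsClosed (S : Set C) := StarSubalgebra.isClosed_topologicalClosure _
  let _ : CommCStarAlgebra S :=
    { (inferInstance : CStarAlgebra S) with
      mul_comm := ((adjoin ℂ s).commRingTopologicalClosure mul_comm).mul_comm }
  have hsS : s ⊆ S := (subset_adjoin ℂ s).trans (StarSubalgebra.le_topologicalClosure _)
  exact exists_forall_norm_apply_mul_norm_le
    (ψ.codRestrict S fun g => hsS (.inr ⟨g, rfl⟩)) (⟨b, hsS (.inl rfl)⟩ : S)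

lemma exists_forall_norm_apply_mul_norm_le_of_commute [T2Space X] [Nontrivial C]
    (ψ : C(X, ℂ) →⋆ₐ[ℂ] C) {c : C} (hψ : ∀ g, Commute c (ψ g)) :
    ∃ x, ∀ d, ‖d x‖ * ‖c‖ ≤ ‖c * ψ d‖ := by
  have hψstar (g : C(X, ℂ)) : Commute (star c) (ψ g) := by
    simpa [← map_star] using (hψ (star g)).star_star
  obtain ⟨x, hx⟩ := exists_forall_norm_apply_mul_norm_le_of_isSelfAdjoint ψ
    (IsSelfAdjoint.star_mul_self c) fun g => (hψstar g).mul_left (hψ g)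
  refine ⟨x, fun d => le_of_sq_le_sq ?_ (norm_nonneg _)⟩
  have hconj : star (c * ψ d) * (c * ψ d) = star c * c * ψ (star d * d) := by
    rw [star_mul, ← map_star, map_mul, mul_assoc, ← mul_assoc (star c), ← mul_assoc (ψ _),
      ← ((hψstar _).mul_left (hψ _)).eq, mul_assoc (star c * c)]
  calc (‖d x‖ * ‖c‖) ^ 2 = ‖(star d * d) x‖ * ‖star c * c‖ := by
        simp only [ContinuousMap.mul_apply, ContinuousMap.star_apply, norm_mul, norm_star,
          CStarRing.norm_star_mul_self]
        ring
    _ ≤ ‖star c * c * ψ (star d * d)‖ := hx _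
    _ = ‖c * ψ d‖ ^ 2 := by rw [← hconj, CStarRing.norm_star_mul_self, sq]

lemma exists_apply_eq_one_norm_mul_le {g : C(X, ℂ)} {x : X} (hg : g x = 0) {ε : ℝ} (hε : 0 < ε) :
    ∃ d : C(X, ℂ), d x = 1 ∧ ‖d‖ ≤ 1 ∧ ‖g * d‖ ≤ ε := by
  have hpos (y : X) : 0 < ε + ‖g y‖ := by positivity
  let d : C(X, ℂ) := ⟨fun y => ((ε / (ε + ‖g y‖) : ℝ) : ℂ), Complex.continuous_ofReal.comp
    (continuous_const.div (by fun_prop) fun y => (hpos y).ne')⟩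
  have hd (y : X) : ‖d y‖ = ε / (ε + ‖g y‖) :=
    Complex.norm_of_nonneg (div_pos hε (hpos y)).le
  refine ⟨d, by simp [d, hg, hε.ne'], (ContinuousMap.norm_le _ zero_le_one).2 fun y => ?_,
    (ContinuousMap.norm_le _ hε.le).2 fun y => ?_⟩
  · rw [hd, div_le_one (hpos y)]
    exact le_add_of_nonneg_right (norm_nonneg _)
  · rw [ContinuousMap.mul_apply, norm_mul, hd, mul_div_left_comm]
    exact mul_le_of_le_one_right hε.le ((div_le_one (hpos y)).2 (le_add_of_nonneg_left hε.le))

lemma norm_mul_map_le {ψ : C(X, ℂ) →⋆ₐ[ℂ] C} {d : C(X, ℂ)} (hd : ‖d‖ ≤ 1) (c : C) :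
    ‖c * ψ d‖ ≤ ‖c‖ :=
  (norm_mul_le _ _).trans <|
    mul_le_of_le_one_right (norm_nonneg c) ((NonUnitalStarAlgHom.norm_apply_le ψ d).trans hd)

lemma exists_norm_mul_map_le_of_mem_fiberIdeal {ψ : C(X, ℂ) →⋆ₐ[ℂ] C} {x : X} {z : C}
    (hz : z ∈ fiberIdeal ψ x) {ε : ℝ} (hε : 0 < ε) :
    ∃ d : C(X, ℂ), d x = 1 ∧ ‖d‖ ≤ 1 ∧ ‖z * ψ d‖ ≤ ε := by
  induction hz using Submodule.span_induction generalizing ε with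
  | mem z hz =>
    obtain ⟨g, hg, rfl⟩ := hz
    obtain ⟨d, hdx, hd, hgd⟩ := exists_apply_eq_one_norm_mul_le hg hε
    refine ⟨d, hdx, hd, ?_⟩
    rw [← map_mul]
    exact (NonUnitalStarAlgHom.norm_apply_le ψ _).trans hgd
  | zero => exact ⟨1, rfl, (ContinuousMap.norm_le _ zero_le_one).2 (by simp), by simp [hε.le]⟩
  | add z w _ _ ihz ihw =>
    obtain ⟨d, hdx, hd, hzd⟩ := ihz (half_pos hε)
    obtain ⟨e, hex, he, hwe⟩ := ihw (half_pos hε)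
    refine ⟨d * e, by simp [hdx, hex],
      (norm_mul_le d e).trans (mul_le_one₀ hd (norm_nonneg e) he), ?_⟩
    calc ‖(z + w) * ψ (d * e)‖ = ‖z * ψ d * ψ e + w * ψ e * ψ d‖ := by
          rw [add_mul, mul_assoc z, mul_assoc w, ← map_mul, ← map_mul, mul_comm e d]
      _ ≤ ‖z * ψ d‖ + ‖w * ψ e‖ :=
          norm_add_le_of_le (norm_mul_map_le he _) (norm_mul_map_le hd _)
      _ ≤ ε := by linarith
  | smul c z _ ih =>
    obtain ⟨d, hdx, hd, hzd⟩ := ih (ε := ε / (‖c‖ + 1)) (by positivity)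
    refine ⟨d, hdx, hd, ?_⟩
    calc ‖c • z * ψ d‖ ≤ ‖c‖ * ‖z * ψ d‖ := by
          rw [smul_eq_mul, mul_assoc]
          exact norm_mul_le _ _
      _ ≤ (‖c‖ + 1) * (ε / (‖c‖ + 1)) := by gcongr; linarith
      _ = ε := by field_simp

lemma exists_forall_norm_le_of_sub_mem_fiberIdeal [T2Space X] [Nontrivial C]
    (ψ : C(X, ℂ) →⋆ₐ[ℂ] C) {c : C} (hψ : ∀ g, Commute c (ψ g)) :
    ∃ x, ∀ b, c - b ∈ fiberIdeal ψ x → ‖c‖ ≤ ‖b‖ := by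
  obtain ⟨x, hx⟩ := exists_forall_norm_apply_mul_norm_le_of_commute ψ hψ
  refine ⟨x, fun b hb => le_of_forall_pos_le_add fun ε hε => ?_⟩
  obtain ⟨d, hdx, hd, hcbd⟩ := exists_norm_mul_map_le_of_mem_fiberIdeal hb hε
  calc ‖c‖ ≤ ‖c * ψ d‖ := by simpa [hdx] using hx d
    _ = ‖b * ψ d + (c - b) * ψ d‖ := by rw [← add_mul, add_sub_cancel]
    _ ≤ ‖b‖ + ε := norm_add_le_of_le (norm_mul_map_le hd b) hcbd

end Localization

section CommutingExtension

variable {X A C : Type*} [TopologicalSpace X] [CStarAlgebra A] [CStarAlgebra C]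
  {h : A →⋆ₐ[ℂ] C} {ψ : C(X, ℂ) →⋆ₐ[ℂ] C}

lemma tensorStarLift_sub_mem_fiberIdeal (hcomm : ∀ a g, Commute (h a) (ψ g))
    (t : A ⊗[ℂ] C(X, ℂ)) (x : X) :
    tensorStarLift h ψ hcomm t - h (tensorToContinuousMap X A t x) ∈ fiberIdeal ψ x := by
  induction t with
  | zero => simp
  | add s t hs ht => simpa [add_sub_add_comm] using add_mem hs ht
  | tmul a g =>
    have hsplit : h a * ψ g - h (g x • a) = h a * (ψ g - algebraMap ℂ C (g x)) := by
      rw [mul_sub, map_smul, ← Algebra.commutes, Algebra.smul_def]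
    rw [tensorStarLift_tmul, tensorToContinuousMap_tmul_apply, hsplit]
    exact Ideal.mul_mem_left _ _ (map_sub_algebraMap_mem_fiberIdeal ψ g x)

variable [CompactSpace X] [T2Space X]

lemma norm_tensorStarLift_le (hcomm : ∀ a g, Commute (h a) (ψ g)) (t : A ⊗[ℂ] C(X, ℂ)) :
    ‖tensorStarLift h ψ hcomm t‖ ≤ ‖tensorToContinuousMap X A t‖ := by
  rcases subsingleton_or_nontrivial C with _ | _
  · simp [Subsingleton.elim (tensorStarLift h ψ hcomm t) 0]
  have hψ (g g' : C(X, ℂ)) : Commute (ψ g) (ψ g') := (Commute.all g g').map ψ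
  obtain ⟨x, hx⟩ := exists_forall_norm_le_of_sub_mem_fiberIdeal ψ fun g =>
    commute_tensorStarLift hcomm (hcomm · g) (hψ · g) t
  calc ‖tensorStarLift h ψ hcomm t‖
      ≤ ‖h (tensorToContinuousMap X A t x)‖ := hx _ (tensorStarLift_sub_mem_fiberIdeal hcomm t x)
    _ ≤ ‖tensorToContinuousMap X A t x‖ := NonUnitalStarAlgHom.norm_apply_le h _
    _ ≤ ‖tensorToContinuousMap X A t‖ := ContinuousMap.norm_coe_le_norm _ x

theorem exists_starAlgHom_extending_of_commute (hcomm : ∀ a g, Commute (h a) (ψ g)) :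
    ∃ Φ : C(X, A) →⋆ₐ[ℂ] C, (∀ a, Φ (ContinuousMap.const X a) = h a) ∧
      ∀ g, Φ (scalarStarAlgHom X A g) = ψ g := by
  obtain ⟨Φ, hΦ⟩ := exists_starAlgHom_extension_of_denseRange
    (e := tensorToContinuousMap X A) denseRange_tensorToContinuousMap
    (f := tensorStarLift h ψ hcomm) (K := 1)
    fun t => (norm_tensorStarLift_le hcomm t).trans_eq (one_mul _).symm
  refine ⟨Φ, fun a => ?_, fun g => ?_⟩
  · have hconst : tensorToContinuousMap X A (a ⊗ₜ 1) = ContinuousMap.const X a := by ext; simp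
    rw [← hconst, hΦ, tensorStarLift_tmul, map_one, mul_one]
  · have hscalar : tensorToContinuousMap X A (1 ⊗ₜ g) = scalarStarAlgHom X A g := by
      ext x
      simp [scalarStarAlgHom_apply]
    rw [← hscalar, hΦ, tensorStarLift_tmul, map_one, one_mul]

end CommutingExtension

section Circle

variable {C : Type*} [CStarAlgebra C]

/-- The continuous functional calculus of a unitary `v`, for functions on the whole circle rather
than on the spectrum of `v`. -/
noncomputable def circleCalculus (v : unitary C) : C(Circle, ℂ) →⋆ₐ[ℂ] C :=
  (cfcHom (R := ℂ) (inferInstance : IsStarNormal (v : C))).comp <|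
    ContinuousMap.compStarAlgHom' ℂ ℂ
      ⟨fun z : spectrum ℂ (v : C) => ⟨z, Unitary.spectrum_subset_circle v z.2⟩, by fun_prop⟩

lemma circleCalculus_coe (v : unitary C) :
    circleCalculus v ⟨fun z => (z : ℂ), continuous_subtype_val⟩ = v :=
  cfcHom_id (R := ℂ) _

lemma commute_circleCalculus {v : unitary C} {c : C} (hc : Commute (v : C) c)
    (hc' : Commute (star (v : C)) c) (g : C(Circle, ℂ)) : Commute c (circleCalculus v g) :=
  (hc.cfcHom _ hc' _).symm

theorem exists_circle_starAlgHom_of_commute {A : Type*} [CStarAlgebra A] (h : A →⋆ₐ[ℂ] C)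
    (v : unitary C) (hv : ∀ a, Commute (v : C) (h a)) :
    ∃ Φ : C(Circle, A) →⋆ₐ[ℂ] C, (∀ a, Φ (ContinuousMap.const Circle a) = h a) ∧
      Φ (circleUnitary A) = v := by
  have hvstar (a : A) : Commute (star (v : C)) (h a) := by
    simpa [← map_star] using (hv (star a)).star_star
  obtain ⟨Φ, hconst, hscalar⟩ := exists_starAlgHom_extending_of_commute fun a =>
    commute_circleCalculus (hv a) (hvstar a)
  refine ⟨Φ, hconst, ?_⟩
  rw [← circleCalculus_coe v, ← hscalar]
  exact congrArg Φ (ContinuousMap.ext fun z => (scalarStarAlgHom_apply (A := A)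
    ⟨fun z : Circle => (z : ℂ), continuous_subtype_val⟩ z).symm)

end Circle

lemma commute_mul_inv_of_conj_eq {R : Type*} [Monoid R] [StarMul R] {u w : unitary R} {b : R}
    (h : star (w : R) * b * w = star (u : R) * b * u) : Commute ((u * w⁻¹ : unitary R) : R) b := by
  change u * star (w : R) * b = b * (u * star (w : R))
  calc (u : R) * star (w : R) * b = u * (star (w : R) * b * w) * star (w : R) := by
        simp [mul_assoc]
    _ = u * (star (u : R) * b * u) * star (w : R) := by rw [h]
    _ = b * (u * star (w : R)) := by simp [← mul_assoc]

theorem exists_circle_starAlgHom_of_strong_unitary_equiv_general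
    {A C : Type*} [CStarAlgebra A] [CStarAlgebra C] (G : Subgroup (unitary C))
    (h₁ : A →⋆ₐ[ℂ] C) (u : unitary C)
    (hequiv : ∃ w : unitary C, w ∈ G ∧ ∀ a : A,
      star (w : C) * h₁ a * (w : C) = star (u : C) * h₁ a * (u : C)) :
    ∃ v : unitary C, u⁻¹ * v ∈ G ∧
      ∃ Φ : C(Circle, A) →⋆ₐ[ℂ] C,
        (∀ a : A, Φ (ContinuousMap.const Circle a) = h₁ a) ∧
          Φ (circleUnitary A) = (v : C) := by
  obtain ⟨w, hwG, hconj⟩ := hequiv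
  refine ⟨u * w⁻¹, ?_, exists_circle_starAlgHom_of_commute h₁ _ fun a =>
    commute_mul_inv_of_conj_eq (hconj a)⟩
  rw [inv_mul_cancel_left]
  exact G.inv_mem hwG

/-- Proposition 3.5 (core): if `h₂ = ad u ∘ h₁` is `G`-strongly unitarily equivalent to `h₁`,
where `G ⊇ U₀(C)` is a normal subgroup of `U(C)`, then there is a unitary `v` with
`u⁻¹ v ∈ G` and a unital `*`-homomorphism `Φ : C(𝕋, A) → C` with `Φ(const a) = h₁(a)`
and `Φ(ζ) = v`. -/
theorem exists_circle_starAlgHom_of_strong_unitary_equiv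
    {A C : Type*}
    [NormedRing A] [StarRing A] [CStarRing A] [NormedAlgebra ℂ A]
    [StarModule ℂ A] [CompleteSpace A]
    [NormedRing C] [StarRing C] [CStarRing C] [NormedAlgebra ℂ C]
    [StarModule ℂ C] [CompleteSpace C]
    (G : Subgroup (unitary C)) [G.Normal]
    (hG : ∀ w : unitary C, w ∈ connectedComponent (1 : unitary C) → w ∈ G)
    (h₁ : A →⋆ₐ[ℂ] C) (u : unitary C)
    (hequiv : ∃ w : unitary C, w ∈ G ∧ ∀ a : A,
      star (w : C) * h₁ a * (w : C) = star (u : C) * h₁ a * (u : C)) :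
    ∃ v : unitary C, u⁻¹ * v ∈ G ∧
      ∃ Φ : C(Circle, A) →⋆ₐ[ℂ] C,
        (∀ a : A, Φ (ContinuousMap.const Circle a) = h₁ a) ∧
          Φ (circleUnitary A) = (v : C) := by
  let _ : CStarAlgebra A := {}
  let _ : CStarAlgebra C := {}
  exact exists_circle_starAlgHom_of_strong_unitary_equiv_general G h₁ u hequiv
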